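/- Let X, Y be Banach spaces, V ⊂ ℝ open, and u : V → L(X;Y) such that for every x ∈ X the orbit t ↦ u(t)x is real analytic on V. Then there exists an open set U ⊂ ℂ containing V such that u extends to a holomorphic function U → L(X;Y); moreover, for every t ∈ V there is a radius r_t > 0, independent of x, such that every orbit is given by its Taylor series at t on (t−r_t, t+r_t). -/

import Mathlib

open Filter Topology Metric

/-- The weak derivative of an operator-valued function is a bounded operator. -/
theorem exists_clm_eq_deriv {X Y : Type*} [NormedAddCommGroup X] [NormedSpace ℂ X]
    [CompleteSpace X] [NormedAddCommGroup Y] [NormedSpace ℂ Y] (u : ℝ → X →L[ℂ] Y) (t : ℝ)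
    (h : ∀ x, DifferentiableAt ℝ (fun s => u s x) t) :
    ∃ B : X →L[ℂ] Y, ∀ x, B x = deriv (fun s => u s x) t := by
  have hlim : Tendsto (fun (s : ℝ) (x : X) => (s⁻¹ • (u (t + s) - u t)) x) (𝓝[≠] 0)
      (𝓝 fun x => deriv (fun s => u s x) t) :=
    tendsto_pi_nhds.2 fun x => by
      simpa using hasDerivAt_iff_tendsto_slope_zero.1 (h x).hasDerivAt
  exact ⟨continuousLinearMapOfTendsto _ hlim, fun _ => rfl⟩

/-- All iterated derivatives of analytic operator orbits are given by bounded operators. -/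
theorem exists_clm_eq_iteratedDeriv {X Y : Type*} [NormedAddCommGroup X] [NormedSpace ℂ X]
    [CompleteSpace X] [NormedAddCommGroup Y] [NormedSpace ℂ Y] [CompleteSpace Y]
    {V : Set ℝ} (hV : IsOpen V) (u : ℝ → X →L[ℂ] Y)
    (h : ∀ x : X, ∀ t ∈ V, AnalyticAt ℝ (fun s : ℝ => u s x) t) (n : ℕ) :
    ∃ A : ℝ → X →L[ℂ] Y, ∀ t ∈ V, ∀ x, A t x = iteratedDeriv n (fun s => u s x) t := by
  induction n with
  | zero => exact ⟨u, fun t _ x => by simp⟩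
  | succ n ih =>
    obtain ⟨A, hA⟩ := ih
    have heq : ∀ t ∈ V, ∀ x, (fun s => A s x) =ᶠ[𝓝 t] iteratedDeriv n (fun s => u s x) :=
      fun t ht x => by
        filter_upwards [hV.mem_nhds ht] with s hs using hA s hs x
    have hB : ∀ t, ∃ B : X →L[ℂ] Y, t ∈ V → ∀ x, B x = deriv (fun s => A s x) t := by
      intro t
      by_cases ht : t ∈ V
      · obtain ⟨B, hB⟩ := exists_clm_eq_deriv A t fun x => by
          have han : AnalyticAt ℝ (iteratedDeriv n (fun s => u s x)) t := by
            rw [iteratedDeriv_eq_iterate]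
            exact (h x t ht).iterated_deriv n
          exact (heq t ht x).differentiableAt_iff.2 han.differentiableAt
        exact ⟨B, fun _ => hB⟩
      · exact ⟨0, fun h => absurd h ht⟩
    choose B hB using hB
    refine ⟨B, fun t ht x => ?_⟩
    rw [hB t ht x, (heq t ht x).deriv_eq, iteratedDeriv_succ]

/-- A sequence of bounded operators that grows pointwise at most geometrically does so in
operator norm. -/
theorem exists_norm_le_geometric_of_pointwise {X Y : Type*} [NormedAddCommGroup X]
    [NormedSpace ℂ X] [CompleteSpace X] [NormedAddCommGroup Y] [NormedSpace ℂ Y]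
    (A : ℕ → X →L[ℂ] Y) (hA : ∀ x, ∃ C r : ℝ, 0 < r ∧ ∀ n, ‖A n x‖ ≤ C * r ^ n) :
    ∃ C r : ℝ, 0 < r ∧ ∀ n, ‖A n‖ ≤ C * r ^ n := by
  let S : ℕ → Set X := fun N => {x | ∀ n, ‖A n x‖ ≤ (N + 1 : ℝ) * (N + 1 : ℝ) ^ n}
  have hS : ∀ N, IsClosed (S N) := fun N => by
    simp only [S, Set.ofPred_forall]
    exact isClosed_iInter fun n => isClosed_le (A n).continuous.norm continuous_const
  have hU : ⋃ N, S N = Set.univ := by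
    refine Set.eq_univ_of_forall fun x => Set.mem_iUnion.2 ?_
    obtain ⟨C, r, hr, hC⟩ := hA x
    obtain ⟨N, hN⟩ := exists_nat_ge (max C r)
    refine ⟨N, fun n => (hC n).trans ?_⟩
    have h1 : C ≤ N + 1 := by linarith [le_max_left C r]
    have h2 : r ≤ N + 1 := by linarith [le_max_right C r]
    gcongr
  obtain ⟨N, x₀, hx₀⟩ := nonempty_interior_of_iUnion_of_closed hS hU
  obtain ⟨ε, hε, hball⟩ := Metric.mem_nhds_iff.1 (mem_interior_iff_mem_nhds.1 hx₀)
  have hN : (0 : ℝ) < N + 1 := by positivity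
  refine ⟨4 * (N + 1) / ε, N + 1, hN, fun n => ?_⟩
  refine ContinuousLinearMap.opNorm_le_of_shell hε (by positivity) (c := (2 : ℂ)) (by simp) ?_
  intro y hy1 hy2
  have h1 : ‖A n (x₀ + y)‖ ≤ (N + 1 : ℝ) * (N + 1 : ℝ) ^ n := hball (by simpa using hy2) n
  have h2 : ‖A n x₀‖ ≤ (N + 1 : ℝ) * (N + 1 : ℝ) ^ n := hball (mem_ball_self hε) n
  have h3 : ‖A n y‖ ≤ ‖A n (x₀ + y)‖ + ‖A n x₀‖ := by
    simpa using norm_sub_le (A n (x₀ + y)) (A n x₀)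
  have h4 : 1 ≤ 2 / ε * ‖y‖ := by
    rw [Complex.norm_ofNat, div_le_iff₀ two_pos] at hy1
    rw [div_mul_eq_mul_div, le_div_iff₀ hε]
    linarith
  calc ‖A n y‖ ≤ 2 * ((N + 1 : ℝ) * (N + 1 : ℝ) ^ n) * 1 := by linarith
    _ ≤ 2 * ((N + 1 : ℝ) * (N + 1 : ℝ) ^ n) * (2 / ε * ‖y‖) := by gcongr
    _ = 4 * (N + 1) / ε * (N + 1 : ℝ) ^ n * ‖y‖ := by ring

/-- The Taylor series of an analytic function of a real variable converges to it near the centre,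
and its coefficients grow at most geometrically. -/
theorem AnalyticAt.taylor_bound_and_hasSum {Y : Type*} [NormedAddCommGroup Y] [NormedSpace ℝ Y]
    [CompleteSpace Y] {f : ℝ → Y} {t : ℝ} (hf : AnalyticAt ℝ f t) :
    (∃ C r : ℝ, 0 < r ∧ ∀ n, ‖((n.factorial : ℝ)⁻¹) • iteratedDeriv n f t‖ ≤ C * r ^ n) ∧
    ∀ᶠ s in 𝓝 t, HasSum
      (fun n => ((s - t) ^ n / (n.factorial : ℝ)) • iteratedDeriv n f t) (f s) := by
  obtain ⟨p, hp⟩ := hf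
  have hc : ∀ n, ((n.factorial : ℝ)⁻¹) • iteratedDeriv n f t = p.coeff n := fun n => by
    obtain ⟨r, hr⟩ := hp
    have h1 := hr.factorial_smul 1 n
    rw [iteratedDeriv_eq_iteratedFDeriv, ← h1, ← Nat.cast_smul_eq_nsmul ℝ, smul_smul,
      inv_mul_cancel₀ (by positivity), one_smul]
    rfl
  constructor
  · obtain ⟨C, r, _, hr, hC⟩ := p.le_mul_pow_of_radius_pos hp.radius_pos
    refine ⟨C, r, hr, fun n => ?_⟩
    rw [hc, ← p.norm_apply_eq_norm_coef]
    exact hC n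
  · filter_upwards [hasFPowerSeriesAt_iff'.1 hp] with s hs
    simpa only [div_eq_mul_inv, mul_smul, hc] using hs

/-- Near every point of `V`, an operator function with analytic orbits extends holomorphically,
and its orbits are given by their Taylor series on a common interval. -/
theorem exists_local_holomorphic_extension {X Y : Type*} [NormedAddCommGroup X] [NormedSpace ℂ X]
    [CompleteSpace X] [NormedAddCommGroup Y] [NormedSpace ℂ Y] [CompleteSpace Y]
    {V : Set ℝ} (hV : IsOpen V) (u : ℝ → X →L[ℂ] Y)
    (h : ∀ x : X, ∀ t ∈ V, AnalyticAt ℝ (fun s : ℝ => u s x) t) {t : ℝ} (ht : t ∈ V) :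
    ∃ r : ℝ, 0 < r ∧ ∃ F : ℂ → X →L[ℂ] Y, DifferentiableOn ℂ F (ball (t : ℂ) r) ∧
      ∀ s : ℝ, |s - t| < r → F s = u s ∧ ∀ x, HasSum (fun k : ℕ =>
        ((s - t) ^ k / (k.factorial : ℝ)) • iteratedDeriv k (fun τ : ℝ => u τ x) t) (u s x) := by
  choose A hA using exists_clm_eq_iteratedDeriv hV u h
  let B : ℕ → X →L[ℂ] Y := fun k => ((k.factorial : ℝ)⁻¹) • A k t
  have hB : ∀ k x, B k x = ((k.factorial : ℝ)⁻¹) • iteratedDeriv k (fun τ : ℝ => u τ x) t :=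
    fun k x => by simp [B, hA k t ht x]
  obtain ⟨C, ρ, hρ, hC⟩ := exists_norm_le_geometric_of_pointwise B fun x => by
    simpa only [hB] using (h x t ht).taylor_bound_and_hasSum.1
  obtain ⟨δ, hδ, hδV⟩ := Metric.isOpen_iff.1 hV t ht
  let r := min δ (2 * ρ)⁻¹
  have hr : 0 < r := by positivity
  have hsum : Summable fun k : ℕ => C * (1 / 2 : ℝ) ^ k := summable_geometric_two.mul_left C
  have hbound : ∀ (k : ℕ) (z : ℂ), z ∈ ball (t : ℂ) r →
      ‖(z - t) ^ k • B k‖ ≤ C * (1 / 2 : ℝ) ^ k := by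
    intro k z hz
    have hz' : ‖z - t‖ ≤ (2 * ρ)⁻¹ :=
      ((mem_ball_iff_norm.1 hz).trans_le (min_le_right _ _)).le
    calc ‖(z - t) ^ k • B k‖ = ‖z - t‖ ^ k * ‖B k‖ := by rw [norm_smul, norm_pow]
      _ ≤ (2 * ρ)⁻¹ ^ k * (C * ρ ^ k) := by
        gcongr
        exact hC k
      _ = C * (1 / 2 : ℝ) ^ k := by
        rw [mul_left_comm, ← mul_pow]
        congr 2
        field_simp
  let F : ℂ → X →L[ℂ] Y := fun z => ∑' k : ℕ, (z - t) ^ k • B k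
  have hF : DifferentiableOn ℂ F (ball (t : ℂ) r) :=
    Complex.differentiableOn_tsum_of_summable_norm hsum
      (fun k => by fun_prop) isOpen_ball hbound
  have hmem : ∀ s : ℝ, |s - t| < r → (s : ℂ) ∈ ball (t : ℂ) r := fun s hs => by
    rwa [mem_ball_iff_norm, ← Complex.ofReal_sub, Complex.norm_real]
  have hFsum : ∀ s : ℝ, |s - t| < r → ∀ x, HasSum (fun k : ℕ =>
      ((s - t) ^ k / (k.factorial : ℝ)) • iteratedDeriv k (fun τ : ℝ => u τ x) t) (F s x) := by
    intro s hs x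
    have h1 : HasSum (fun k : ℕ => ((s : ℂ) - t) ^ k • B k) (F s) :=
      (hsum.of_norm_bounded fun k => hbound k s (hmem s hs)).hasSum
    have h2 := (ContinuousLinearMap.apply ℂ Y x).hasSum h1
    convert h2 using 2 with k
    · simp only [ContinuousLinearMap.apply_apply, smul_apply, hB]
      rw [← Complex.ofReal_sub, ← Complex.ofReal_pow, Complex.coe_smul, div_eq_mul_inv, mul_smul]
    · rfl
  have hFu : ∀ s : ℝ, |s - t| < r → F s = u s := by
    intro s hs
    ext x
    have hFan : AnalyticOnNhd ℝ (fun s : ℝ => F s x) (ball t r) := fun s hs => by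
      have h1 : AnalyticAt ℂ F s :=
        hF.analyticAt (isOpen_ball.mem_nhds (hmem s hs))
      have h2 : AnalyticAt ℂ (fun z => F z x) (s : ℂ) :=
        ((ContinuousLinearMap.apply ℂ Y x).analyticAt _).comp h1
      exact (h2.restrictScalars (𝕜 := ℝ)).comp (Complex.ofRealCLM.analyticAt s)
    have huan : AnalyticOnNhd ℝ (fun s : ℝ => u s x) (ball t r) := fun s hs =>
      h x s (hδV (ball_subset_ball (min_le_left _ _) hs))
    refine hFan.eqOn_of_preconnected_of_eventuallyEq huan
      (convex_ball t r).isPreconnected (mem_ball_self hr) ?_ hs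
    filter_upwards [(h x t ht).taylor_bound_and_hasSum.2, ball_mem_nhds t hr] with s h1 h2
    exact (hFsum s h2 x).unique h1
  refine ⟨r, hr, F, hF, fun s hs => ⟨hFu s hs, fun x => ?_⟩⟩
  rw [← hFu s hs]
  exact hFsum s hs x

/-- Holomorphic extensions to discs with real centres glue to a holomorphic extension to the union
of the discs. -/
theorem exists_holomorphic_extension_of_local {E : Type*} [NormedAddCommGroup E] [NormedSpace ℂ E]
    [CompleteSpace E] (V : Set ℝ) (u : ℝ → E)
    (h : ∀ t ∈ V, ∃ r : ℝ, 0 < r ∧ ∃ F : ℂ → E, DifferentiableOn ℂ F (ball (t : ℂ) r) ∧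
      ∀ s : ℝ, |s - t| < r → F s = u s) :
    ∃ U : Set ℂ, IsOpen U ∧ (∀ t ∈ V, (t : ℂ) ∈ U) ∧
      ∃ F : ℂ → E, DifferentiableOn ℂ F U ∧ ∀ t ∈ V, F (t : ℂ) = u t := by
  have h' : ∀ t : V, ∃ r : ℝ, 0 < r ∧ ∃ F : ℂ → E, DifferentiableOn ℂ F (ball (t : ℂ) r) ∧
    ∀ s : ℝ, |s - t| < r → F s = u s := fun t => h t t.2
  choose r hr F hF hFu using h'
  have compat : ∀ a b : V, ∀ z : ℂ, z ∈ ball ((a : ℝ) : ℂ) (r a) → z ∈ ball ((b : ℝ) : ℂ) (r b) →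
      F a z = F b z := by
    intro a b z hza hzb
    let W := ball ((a : ℝ) : ℂ) (r a) ∩ ball ((b : ℝ) : ℂ) (r b)
    have hre : ∀ c : V, z ∈ ball ((c : ℝ) : ℂ) (r c) → |z.re - c| < r c := fun c hc => by
      have := (Complex.abs_re_le_norm (z - (c : ℝ))).trans_lt (mem_ball_iff_norm.1 hc)
      simpa using this
    have hmem : ∀ c : V, |z.re - c| < r c → (z.re : ℂ) ∈ ball ((c : ℝ) : ℂ) (r c) :=
      fun c hc => by
        rwa [mem_ball_iff_norm, ← Complex.ofReal_sub, Complex.norm_real]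
    have hev : ∀ c : V, z ∈ ball ((c : ℝ) : ℂ) (r c) →
        ∀ᶠ s : ℝ in 𝓝[≠] z.re, F c s = u s := fun c hc =>
      nhdsWithin_le_nhds <| by
        filter_upwards [isOpen_ball.mem_nhds (show z.re ∈ ball (c : ℝ) (r c) from hre c hc)]
          with s hs using hFu c s hs
    have htend : Tendsto (fun s : ℝ => (s : ℂ)) (𝓝[≠] z.re) (𝓝[≠] (z.re : ℂ)) :=
      Complex.continuous_ofReal.continuousAt.continuousWithinAt.tendsto_nhdsWithin
        fun s hs => by simpa using hs
    have hfreq : ∃ᶠ w in 𝓝[≠] (z.re : ℂ), F a w = F b w :=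
      htend.frequently (((hev a hza).and (hev b hzb)).mono fun s hs => hs.1.trans hs.2.symm).frequently
    have hW : IsOpen W := isOpen_ball.inter isOpen_ball
    exact ((hF a).mono Set.inter_subset_left
      |>.analyticOnNhd hW).eqOn_of_preconnected_of_frequently_eq
      ((hF b).mono Set.inter_subset_right |>.analyticOnNhd hW)
      ((convex_ball _ _).inter (convex_ball _ _)).isPreconnected
      ⟨hmem a (hre a hza), hmem b (hre b hzb)⟩ hfreq ⟨hza, hzb⟩
  classical
  let G : ℂ → E := fun z =>
    if hz : ∃ t : V, z ∈ ball ((t : ℝ) : ℂ) (r t) then F hz.choose z else 0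
  have hG : ∀ t : V, Set.EqOn G (F t) (ball ((t : ℝ) : ℂ) (r t)) := fun t z hz => by
    have hz' : ∃ t : V, z ∈ ball ((t : ℝ) : ℂ) (r t) := ⟨t, hz⟩
    simp only [G, dif_pos hz']
    exact compat _ _ z hz'.choose_spec hz
  refine ⟨⋃ t : V, ball ((t : ℝ) : ℂ) (r t), isOpen_iUnion fun t => isOpen_ball,
    fun t ht => Set.mem_iUnion.2 ⟨⟨t, ht⟩, mem_ball_self (hr _)⟩, G, fun z hz => ?_,
    fun t ht => ?_⟩
  · obtain ⟨t, hz⟩ := Set.mem_iUnion.1 hz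
    exact (((hF t).congr (hG t)).differentiableAt
      (isOpen_ball.mem_nhds hz)).differentiableWithinAt
  · rw [hG ⟨t, ht⟩ (mem_ball_self (hr _))]
    exact hFu ⟨t, ht⟩ t (by simpa using hr ⟨t, ht⟩)

/-- If every orbit of `u : V → L(X;Y)` is real analytic on the open set `V ⊆ ℝ`,
then `u` extends holomorphically to an open set `U ⊆ ℂ` containing `V`; moreover,
around every point `t ∈ V` there is a radius `r > 0`, independent of `x`, on which
every orbit is given by its Taylor series at `t`. -/
theorem analytic_orbits_holomorphic_extension_and_uniform_radius
    {X Y : Type*} [NormedAddCommGroup X] [NormedSpace ℂ X] [CompleteSpace X]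
    [NormedAddCommGroup Y] [NormedSpace ℂ Y] [CompleteSpace Y]
    (V : Set ℝ) (hV : IsOpen V) (u : ℝ → X →L[ℂ] Y)
    (h : ∀ x : X, ∀ t ∈ V, AnalyticAt ℝ (fun s : ℝ => u s x) t) :
    (∃ U : Set ℂ, IsOpen U ∧ (∀ t ∈ V, (t : ℂ) ∈ U) ∧
      ∃ F : ℂ → X →L[ℂ] Y, DifferentiableOn ℂ F U ∧ ∀ t ∈ V, F (t : ℂ) = u t) ∧
    (∀ t ∈ V, ∃ r : ℝ, 0 < r ∧ ∀ x : X, ∀ s : ℝ, |s - t| < r →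
      u s x = ∑' k : ℕ,
        ((s - t) ^ k / (k.factorial : ℝ)) •
          iteratedDeriv k (fun τ : ℝ => u τ x) t) := by
  constructor
  · refine exists_holomorphic_extension_of_local V u fun t ht => ?_
    obtain ⟨r, hr, F, hF, hFu⟩ := exists_local_holomorphic_extension hV u h ht
    exact ⟨r, hr, F, hF, fun s hs => (hFu s hs).1⟩
  · intro t ht
    obtain ⟨r, hr, F, -, hFu⟩ := exists_local_holomorphic_extension hV u h ht
    exact ⟨r, hr, fun x s hs => ((hFu s hs).2 x).tsum_eq.symm⟩
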